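/- arXiv:0802.1293 — 2 statements merged into one kernel-verified Lean document; each statement's English description precedes it below -/
import Mathlib

section
/- Let N ≥ 2 be an EVEN integer and let A_1, A_2, … be a quasifibonacci sequence of level N. For every positive integer m, the coefficient h_m of x^m in the formal power series ∏_{k≥1}(1 − x^{A_k}) satisfies h_m ∈ {−1, 0, 1}. Equivalently, the number of representations of m as a sum of an even number of distinct terms A_i and the number of representations of m as a sum of an odd number of distinct terms A_i differ by at most 1. -/
/-- `A` (with meaningful values at indices `≥ 1`) is a quasifibonacci sequence of level `N`:
the terms are positive, `A (k+N) = A (k+N-1) + ⋯ + A k` for all `k ≥ 1`, and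
`A k > A (k-1) + ⋯ + A 1` for all `1 ≤ k ≤ N`. -/
def QuasiFib (N : ℕ) (A : ℕ → ℕ) : Prop :=
  (∀ i, 1 ≤ i → 0 < A i) ∧
  (∀ k, 1 ≤ k → A (k + N) = ∑ i ∈ Finset.Icc k (k + N - 1), A i) ∧
  (∀ k, 1 ≤ k → k ≤ N → (∑ i ∈ Finset.Icc 1 (k - 1), A i) < A k)

/-- `SRep A n` is the set of partitions of `n` into distinct terms of `A`, encoded as the
finite sets `F` of positive indices with `∑_{i ∈ F} A i = n` (i.e. the 0-1 indicator
sequences of the paper). -/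
def SRep (A : ℕ → ℕ) (n : ℕ) : Set (Finset ℕ) :=
  {F | (∀ i ∈ F, 1 ≤ i) ∧ (∑ i ∈ F, A i) = n}

/-- the length `l(a)`: the largest index `i` with `a_i = 1` (and `0` for the empty set). -/
def len (F : Finset ℕ) : ℕ := F.sup id

/-- The directed edge relation of the digraph `G_n`: `(a,b)` is an edge iff there is a `k ≥ 1`
with `a_{k+N} = 1`, `a_k = ⋯ = a_{k+N-1} = 0`, `b_{k+N} = 0`, `b_k = ⋯ = b_{k+N-1} = 1`, and
`a_t = b_t` for all `t ∉ {k, …, k+N}`. -/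
def Edge (N : ℕ) (F G : Finset ℕ) : Prop :=
  ∃ k, 1 ≤ k ∧ (k + N) ∈ F ∧ (∀ i ∈ Finset.Ico k (k + N), i ∉ F) ∧
    (k + N) ∉ G ∧ (∀ i ∈ Finset.Ico k (k + N), i ∈ G) ∧
    (∀ t, t ∉ Finset.Icc k (k + N) → (t ∈ F ↔ t ∈ G))

/-- The partial order of the poset `P_n`: `a ≥ b` iff `b` is reachable from `a` by a
(possibly empty) directed path of edges. -/
def pge (N : ℕ) : Finset ℕ → Finset ℕ → Prop := Relation.ReflTransGen (Edge N)

/-- `A_{k,0} = A_k + Σ_{1 ≤ i < k-N-1, N∤i} A_{k-N-1-i}`. -/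
def Ak0 (N : ℕ) (A : ℕ → ℕ) (k : ℕ) : ℕ :=
  A k + ∑ i ∈ (Finset.Ico 1 (k - N - 1)).filter (fun i => ¬ N ∣ i), A (k - N - 1 - i)

/-- `A_{k,1} = A_k + Σ_{1 ≤ i < k-N, N∤i} A_{k-N-i}`. -/
def Ak1 (N : ℕ) (A : ℕ → ℕ) (k : ℕ) : ℕ :=
  A k + ∑ i ∈ (Finset.Ico 1 (k - N)).filter (fun i => ¬ N ∣ i), A (k - N - i)

/-- `A_{k,2} = A_k + Σ_{1 ≤ i < k-N+1, N∤i} A_{k-N+1-i}`. -/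
def Ak2 (N : ℕ) (A : ℕ → ℕ) (k : ℕ) : ℕ :=
  A k + ∑ i ∈ (Finset.Ico 1 (k - N + 1)).filter (fun i => ¬ N ∣ i), A (k - N + 1 - i)

/-!
Write `P n = ∏_{1 ≤ k ≤ n} (1 - X ^ A k)` and `S n = A 1 + ⋯ + A n`, the degree of `P n`. Every
`P n` has coefficients in `{-1, 0, 1}`, by strong induction on `n`. For `n ≤ N` the two terms of
`P n = P (n - 1) - X ^ A n * P (n - 1)` do not overlap, as `A n > S (n - 1)`. For `n = q + N + 1`
the recurrence reads `S (n - 1) = S q + A n`, so they overlap in the exponents `m + A n` with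
`m ≤ S q`. All the terms from `A (q + 2)` on exceed `S q`, so the coefficients of `P (n - 1)` up to
degree `S q` are those of `P (q + 1)`. Since each `P k` is palindromic up to the sign `(-1) ^ k`,
the top coefficients of `P (n - 1)` are those of `P (q + 1)` times `(-1) ^ (N - 1) = -1`. Hence on
the overlap the coefficients of `P n` are, up to sign, those of
`(1 + X ^ A (q + 1)) * P (q + 1) = (1 - X ^ (2 * A (q + 1))) * P q`, where again the two terms do
not overlap, because `2 * A (q + 1) > S q`.
-/

section FlatPolynomials

open Polynomial

/-- A flat integer polynomial: all its coefficients lie in `{-1, 0, 1}`. -/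
def IsFlat (p : ℤ[X]) : Prop :=
  ∀ m, |p.coeff m| ≤ 1

lemma coeff_one_sub_X_pow_mul_of_lt {R : Type*} [Ring R] (p : R[X]) {d m : ℕ} (h : m < d) :
    ((1 - X ^ d) * p).coeff m = p.coeff m := by
  rw [sub_mul, one_mul, coeff_sub, coeff_X_pow_mul', if_neg h.not_ge, sub_zero]

lemma coeff_one_sub_X_pow_mul_add {R : Type*} [Ring R] (p : R[X]) (d m : ℕ) :
    ((1 - X ^ d) * p).coeff (m + d) = p.coeff (m + d) - p.coeff m := by
  rw [sub_mul, one_mul, coeff_sub, coeff_X_pow_mul]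

lemma IsFlat.one_sub_X_pow_mul {p : ℤ[X]} (hp : IsFlat p) {d : ℕ} (hd : p.natDegree < d) :
    IsFlat ((1 - X ^ d) * p) := by
  intro m
  obtain hm | ⟨r, rfl⟩ := (lt_or_ge m d).imp_right Nat.exists_eq_add_of_le'
  · rw [coeff_one_sub_X_pow_mul_of_lt p hm]
    exact hp m
  · rw [coeff_one_sub_X_pow_mul_add, coeff_eq_zero_of_natDegree_lt (by omega), zero_sub, abs_neg]
    exact hp r

end FlatPolynomials

section SignedSumPoly

open Finset Polynomial

/-- The product `∏ k ∈ s, (1 - X ^ A k)`. Its coefficient at `m` counts the subsets of `s` on which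
`A` sums to `m`, a subset `F` having the weight `(-1) ^ #F`. -/
noncomputable def signedSumPoly {ι : Type*} (A : ι → ℕ) (s : Finset ι) : ℤ[X] :=
  ∏ k ∈ s, (1 - X ^ A k)

lemma coeff_signedSumPoly {ι : Type*} (A : ι → ℕ) (s : Finset ι) (m : ℕ) :
    (signedSumPoly A s).coeff m = ∑ F ∈ s.powerset with ∑ i ∈ F, A i = m, (-1) ^ #F := by
  have expand : signedSumPoly A s = ∑ F ∈ s.powerset, C ((-1) ^ #F) * X ^ ∑ i ∈ F, A i := by
    simp [signedSumPoly, sub_eq_add_neg, prod_one_add, prod_neg, prod_pow_eq_pow_sum]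
  simp only [expand, finsetSum_coeff, coeff_C_mul_X_pow, sum_filter, eq_comm]

lemma sum_neg_one_pow_card {ι : Type*} (T : Finset (Finset ι)) :
    ∑ F ∈ T, (-1 : ℤ) ^ #F = #{F ∈ T | Even #F} - #{F ∈ T | Odd #F} := by
  have even_part : ∑ F ∈ T with Even #F, (-1 : ℤ) ^ #F = #{F ∈ T | Even #F} := by
    rw [sum_congr rfl fun F hF ↦ (mem_filter.mp hF).2.neg_one_pow, sum_const, nsmul_one]
  have odd_part : ∑ F ∈ T with Odd #F, (-1 : ℤ) ^ #F = -#{F ∈ T | Odd #F} := by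
    rw [sum_congr rfl fun F hF ↦ (mem_filter.mp hF).2.neg_one_pow, sum_const, smul_neg, nsmul_one]
  rw [← sum_filter_add_sum_filter_not T (fun F ↦ Even #F), even_part]
  simp only [Nat.not_even_iff_odd, odd_part, sub_eq_add_neg]

lemma natDegree_signedSumPoly_le {ι : Type*} (A : ι → ℕ) (s : Finset ι) :
    (signedSumPoly A s).natDegree ≤ ∑ k ∈ s, A k :=
  (natDegree_prod_le _ _).trans <| sum_le_sum fun k _ ↦ by compute_degree

lemma reflect_signedSumPoly {ι : Type*} (A : ι → ℕ) (s : Finset ι) :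
    reflect (∑ k ∈ s, A k) (signedSumPoly A s) = (-1) ^ #s * signedSumPoly A s := by
  classical
  induction s using Finset.induction_on with
  | empty => simp [signedSumPoly]
  | insert a s ha ih =>
    have reflect_factor : reflect (A a) (1 - X ^ A a : ℤ[X]) = -(1 - X ^ A a) := by
      simp [reflect_sub, reflect_one, reflect_monomial, revAt_le]
    have insert_eq : signedSumPoly A (insert a s) = (1 - X ^ A a) * signedSumPoly A s :=
      prod_insert ha
    rw [insert_eq, sum_insert ha, reflect_mul _ _ (by compute_degree)
      (natDegree_signedSumPoly_le A s), reflect_factor, ih, card_insert_of_notMem ha, pow_succ]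
    ring

lemma coeff_signedSumPoly_of_add_eq {ι : Type*} (A : ι → ℕ) (s : Finset ι) {a b : ℕ}
    (h : a + b = ∑ k ∈ s, A k) :
    (signedSumPoly A s).coeff a = (-1) ^ #s * (signedSumPoly A s).coeff b := by
  have reflected := congrArg (coeff · b) (reflect_signedSumPoly A s)
  rw [← C_1, ← C_neg, ← C_pow] at reflected
  simp only [coeff_reflect, coeff_C_mul] at reflected
  rwa [revAt_le (by omega), show ∑ k ∈ s, A k - b = a by omega] at reflected

lemma signedSumPoly_Icc_succ (A : ℕ → ℕ) (n : ℕ) :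
    signedSumPoly A (Icc 1 (n + 1)) = (1 - X ^ A (n + 1)) * signedSumPoly A (Icc 1 n) := by
  rw [signedSumPoly, prod_Icc_succ_top (by omega), mul_comm, signedSumPoly]

end SignedSumPoly

section PartialSum

open Finset

/-- The sum `A 1 + ⋯ + A n`; the value `A 0` does not enter. -/
def partialSum (A : ℕ → ℕ) (n : ℕ) : ℕ :=
  ∑ i ∈ Icc 1 n, A i

lemma partialSum_succ (A : ℕ → ℕ) (n : ℕ) :
    partialSum A (n + 1) = partialSum A n + A (n + 1) :=
  sum_Icc_succ_top (by omega) A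

lemma partialSum_mono (A : ℕ → ℕ) : Monotone (partialSum A) :=
  monotone_nat_of_le_succ fun n ↦ by simp [partialSum_succ]

end PartialSum

namespace QuasiFib

open Finset Polynomial

variable {N : ℕ} {A : ℕ → ℕ}

lemma pos (hA : QuasiFib N A) {i : ℕ} (hi : 1 ≤ i) : 0 < A i :=
  hA.1 i hi

lemma partialSum_add_level (hA : QuasiFib N A) (k : ℕ) :
    partialSum A (k + N) = partialSum A k + A (k + N + 1) := by
  have recurrence : A (k + N + 1) = ∑ i ∈ Ioc k (k + N), A i := by
    rw [add_right_comm, hA.2.1 (k + 1) (by omega), ← Icc_add_one_left_eq_Ioc,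
      show k + 1 + N - 1 = k + N by omega]
  have partialSum_eq (n : ℕ) : partialSum A n = ∑ i ∈ Ioc 0 n, A i := by
    rw [partialSum, ← Icc_add_one_left_eq_Ioc, zero_add]
  rw [recurrence, partialSum_eq, partialSum_eq,
    sum_Ioc_consecutive A k.zero_le (Nat.le_add_right k N)]

lemma partialSum_lt_apply_succ (hA : QuasiFib N A) {k : ℕ} (hk : k < N) :
    partialSum A k < A (k + 1) :=
  hA.2.2 (k + 1) (by omega) hk

lemma partialSum_lt_apply_add_two (hA : QuasiFib N A) (hN : 2 ≤ N) (k : ℕ) :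
    partialSum A k < A (k + 2) := by
  induction k with
  | zero => exact hA.pos (by omega)
  | succ k ih =>
    change partialSum A (k + 1) < A (k + 2 + 1)
    have succ_eq : partialSum A (k + 2) = partialSum A (k + 1) + A (k + 2) := partialSum_succ A _
    obtain hk | ⟨p, hp⟩ := (lt_or_ge (k + 2) N).imp_right Nat.exists_eq_add_of_le'
    · have := hA.partialSum_lt_apply_succ hk
      omega
    · have recurrence := hA.partialSum_add_level p
      have := partialSum_mono A (show p ≤ k by omega)
      rw [← hp] at recurrence
      omega

lemma partialSum_lt_apply_of_add_two_le (hA : QuasiFib N A) (hN : 2 ≤ N) {k i : ℕ}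
    (hi : k + 2 ≤ i) : partialSum A k < A i := by
  obtain ⟨t, rfl⟩ := Nat.exists_eq_add_of_le' hi
  exact (partialSum_mono A (Nat.le_add_left k t)).trans_lt
    (hA.partialSum_lt_apply_add_two hN (t + k))

lemma partialSum_lt_two_mul_apply_succ (hA : QuasiFib N A) (hN : 2 ≤ N) (k : ℕ) :
    partialSum A k < 2 * A (k + 1) := by
  obtain hk | ⟨p, rfl⟩ := (lt_or_ge k N).imp_right Nat.exists_eq_add_of_le'
  · have := hA.partialSum_lt_apply_succ hk
    omega
  · have := hA.partialSum_add_level p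
    have := hA.partialSum_lt_apply_of_add_two_le hN (show p + 2 ≤ p + N + 1 by omega)
    omega

lemma le_partialSum (hA : QuasiFib N A) (n : ℕ) : n ≤ partialSum A n := by
  induction n with
  | zero => exact Nat.zero_le _
  | succ n ih =>
    have := hA.pos (show 1 ≤ n + 1 by omega)
    rw [partialSum_succ]
    omega

lemma le_sum_add_one_of_mem (hA : QuasiFib N A) (hN : 2 ≤ N) {F : Finset ℕ} {i : ℕ}
    (hi : i ∈ F) : i ≤ ∑ j ∈ F, A j + 1 := by
  obtain hi_lt | ⟨k, rfl⟩ := (lt_or_ge i 2).imp_right Nat.exists_eq_add_of_le'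
  · omega
  · have := hA.le_partialSum k
    have := hA.partialSum_lt_apply_add_two hN k
    have := single_le_sum_of_canonicallyOrdered (f := A) hi
    omega

lemma ncard_even_sub_ncard_odd (hA : QuasiFib N A) (hN : 2 ≤ N) (m : ℕ) :
    (({F : Finset ℕ | (∀ i ∈ F, 1 ≤ i) ∧ (∑ i ∈ F, A i) = m ∧ Even #F}.ncard : ℤ) -
        ({F : Finset ℕ | (∀ i ∈ F, 1 ≤ i) ∧ (∑ i ∈ F, A i) = m ∧ Odd #F}.ncard : ℤ)) =
      (signedSumPoly A (Icc 1 (m + 1))).coeff m := by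
  let T : Finset (Finset ℕ) := {F ∈ (Icc 1 (m + 1)).powerset | ∑ i ∈ F, A i = m}
  have mem_T (F : Finset ℕ) : F ∈ T ↔ (∀ i ∈ F, 1 ≤ i) ∧ ∑ i ∈ F, A i = m := by
    simp only [T, mem_filter, mem_powerset, subset_iff, mem_Icc]
    refine and_congr_left fun hF ↦ forall₂_congr fun i hi ↦ and_iff_left ?_
    exact hF ▸ hA.le_sum_add_one_of_mem hN hi
  simp only [← and_assoc, ← mem_T]
  rw [coeff_signedSumPoly, sum_neg_one_pow_card]
  simp only [← coe_filter, Set.ncard_coe_finset, T]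

lemma coeff_eq_of_le_partialSum (hA : QuasiFib N A) (hN : 2 ≤ N) {q n m : ℕ} (hn : q + 1 ≤ n)
    (hm : m ≤ partialSum A q) :
    (signedSumPoly A (Icc 1 n)).coeff m = (signedSumPoly A (Icc 1 (q + 1))).coeff m := by
  induction n, hn using Nat.le_induction with
  | base => rfl
  | succ n hn ih =>
    have := hA.partialSum_lt_apply_of_add_two_le hN (show q + 2 ≤ n + 1 by omega)
    rw [signedSumPoly_Icc_succ, coeff_one_sub_X_pow_mul_of_lt _ (by omega), ih]

lemma coeff_add_eq_neg (hA : QuasiFib N A) (hN : 2 ≤ N) (hEven : Even N) {q m : ℕ}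
    (hm : m ≤ partialSum A q) :
    (signedSumPoly A (Icc 1 (q + N))).coeff (m + A (q + N + 1)) =
      -(signedSumPoly A (Icc 1 (q + 1))).coeff (m + A (q + 1)) := by
  obtain ⟨b, hb⟩ := Nat.exists_eq_add_of_le' hm
  have mirror_add : m + A (q + N + 1) + b = partialSum A (q + N) := by
    rw [hA.partialSum_add_level, hb]
    ring
  have mirror_succ : b + (m + A (q + 1)) = partialSum A (q + 1) := by
    rw [partialSum_succ, hb, add_assoc]
  rw [coeff_signedSumPoly_of_add_eq A _ mirror_add,
    hA.coeff_eq_of_le_partialSum hN (by omega : q + 1 ≤ q + N) (by omega),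
    coeff_signedSumPoly_of_add_eq A _ mirror_succ, ← mul_assoc, ← pow_add]
  have sign_odd : Odd (#(Icc 1 (q + N)) + #(Icc 1 (q + 1))) := by
    simp only [Nat.card_Icc]
    grind
  rw [sign_odd.neg_one_pow, neg_one_mul]

lemma coeff_succ_eq_neg (hA : QuasiFib N A) (hN : 2 ≤ N) (hEven : Even N) {q m : ℕ}
    (hm : m ≤ partialSum A q) :
    (signedSumPoly A (Icc 1 (q + N + 1))).coeff (m + A (q + N + 1)) =
      -((1 - X ^ (2 * A (q + 1))) * signedSumPoly A (Icc 1 q)).coeff (m + A (q + 1)) := by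
  have factor : (1 - X ^ (2 * A (q + 1))) * signedSumPoly A (Icc 1 q) =
      signedSumPoly A (Icc 1 (q + 1)) + X ^ A (q + 1) * signedSumPoly A (Icc 1 (q + 1)) := by
    rw [signedSumPoly_Icc_succ]
    ring
  rw [factor, coeff_add, coeff_X_pow_mul, signedSumPoly_Icc_succ, coeff_one_sub_X_pow_mul_add,
    hA.coeff_add_eq_neg hN hEven hm, hA.coeff_eq_of_le_partialSum hN (by omega) hm]
  ring

theorem isFlat_signedSumPoly (hA : QuasiFib N A) (hN : 2 ≤ N) (hEven : Even N) (n : ℕ) :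
    IsFlat (signedSumPoly A (Icc 1 n)) := by
  induction n using Nat.strong_induction_on with
  | _ n ih =>
  have natDegree_le (k : ℕ) : (signedSumPoly A (Icc 1 k)).natDegree ≤ partialSum A k :=
    natDegree_signedSumPoly_le A _
  obtain _ | n := n
  · intro m
    simp only [signedSumPoly, Icc_eq_empty_of_lt one_pos, prod_empty, coeff_one]
    split_ifs <;> simp
  obtain hn | ⟨q, rfl⟩ := (lt_or_ge n N).imp_right Nat.exists_eq_add_of_le'
  · rw [signedSumPoly_Icc_succ]
    exact (ih n n.lt_succ_self).one_sub_X_pow_mul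
      ((natDegree_le n).trans_lt (hA.partialSum_lt_apply_succ hn))
  intro m
  obtain hm | ⟨r, rfl⟩ := (lt_or_ge m (A (q + N + 1))).imp_right Nat.exists_eq_add_of_le'
  · rw [signedSumPoly_Icc_succ, coeff_one_sub_X_pow_mul_of_lt _ hm]
    exact ih (q + N) (Nat.lt_succ_self _) m
  obtain hr | hr := le_or_gt r (partialSum A q)
  · rw [hA.coeff_succ_eq_neg hN hEven hr, abs_neg]
    exact (ih q (by omega)).one_sub_X_pow_mul
      ((natDegree_le q).trans_lt (hA.partialSum_lt_two_mul_apply_succ hN q)) _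
  · have natDegree_lt : (signedSumPoly A (Icc 1 (q + N))).natDegree < r + A (q + N + 1) := by
      have := natDegree_le (q + N)
      have := hA.partialSum_add_level q
      omega
    rw [signedSumPoly_Icc_succ, coeff_one_sub_X_pow_mul_add,
      coeff_eq_zero_of_natDegree_lt natDegree_lt, zero_sub, abs_neg]
    exact ih (q + N) (Nat.lt_succ_self _) r

end QuasiFib

/-- Theorem 1.1: for a quasifibonacci sequence of even level `N`, every coefficient `h_m`
(`m ≥ 1`) of `∏_{k ≥ 1} (1 - x^{A_k})` lies in `{-1, 0, 1}`; equivalently, the number of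
representations of `m` as a sum of an even number of distinct terms `A_i` and the number of
representations as a sum of an odd number of distinct terms differ by at most `1`. -/
theorem stmt_0 (N : ℕ) (hN : 2 ≤ N) (hNeven : Even N) (A : ℕ → ℕ) (hA : QuasiFib N A)
    (m : ℕ) (hm : 1 ≤ m) :
    (({F : Finset ℕ | (∀ i ∈ F, 1 ≤ i) ∧ (∑ i ∈ F, A i) = m ∧ Even F.card}.ncard : ℤ) -
        ({F : Finset ℕ | (∀ i ∈ F, 1 ≤ i) ∧ (∑ i ∈ F, A i) = m ∧ Odd F.card}.ncard : ℤ))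
      ∈ ({-1, 0, 1} : Set ℤ) := by
  rw [hA.ncard_even_sub_ncard_odd hN m]
  have flat := abs_le.mp (hA.isFlat_signedSumPoly hN hNeven (m + 1) m)
  simp only [Set.mem_insert_iff, Set.mem_singleton_iff]
  omega
end

section
/- Let N ≥ 2 be an EVEN integer and let A_1, A_2, … be a quasifibonacci sequence of level N. Then for every k ≥ N+1 and every n with A_{k,0} < n ≤ A_{k,1}, one has h_n = 0, where h_n = Σ_{a∈S_n} σ(a). -/
/-- the signed count `Σ_{a ∈ S} σ(a)` where `σ(a) = (-1)^{number of ones of a}`. -/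
noncomputable def sgnSum (S : Set (Finset ℕ)) : ℤ := ∑ᶠ F ∈ S, (-1 : ℤ) ^ F.card

/-!
The recursion says that the block `j, …, j + N - 1` of indices carries the same total as the
single index `k = j + N`, so trading one for the other is a partial operation on the
representations of `n`. It changes the number of terms by `N - 1`, hence flips the sign when `N`
is even. Write `n = A k + m`. If `m < A j`, a representation containing `k` has no room for an
element of the block. If moreover `A 1 + ⋯ + A (j - 1) < A j + m`, a representation avoiding `k`
cannot afford to miss an element of the block. Under both bounds the trade is therefore defined on
every representation: it is the symmetric difference with `{j, …, k}`, a sign-reversing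
involution. The offsets in `A_{k,0}` and `A_{k,1}` satisfy the recursion of `A` with the first
term of each block left out, which yields both bounds on `m`.
-/

open Finset
open scoped symmDiff

section SymmDiff

theorem sum_symmDiff_add_two_nsmul_sum_inter {ι M : Type*} [DecidableEq ι] [AddCommMonoid M]
    (s t : Finset ι) (f : ι → M) :
    ∑ i ∈ s ∆ t, f i + 2 • ∑ i ∈ s ∩ t, f i = ∑ i ∈ s, f i + ∑ i ∈ t, f i := by
  rw [Finset.symmDiff_def, sum_union disjoint_sdiff_sdiff, ← sum_inter_add_sum_sdiff s t f,
    ← sum_inter_add_sum_sdiff t s f, inter_comm t s]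
  abel

theorem neg_one_pow_card_symmDiff {ι R : Type*} [DecidableEq ι] [Monoid R] [HasDistribNeg R]
    (s t : Finset ι) :
    (-1 : R) ^ #(s ∆ t) = (-1) ^ #s * (-1) ^ #t := by
  have hcard : #(s ∆ t) + 2 * #(s ∩ t) = #s + #t := by
    simpa only [card_eq_sum_ones, smul_eq_mul] using
      sum_symmDiff_add_two_nsmul_sum_inter s t fun _ ↦ (1 : ℕ)
  rw [← pow_add, ← hcard, pow_add, (even_two_mul _).neg_one_pow, mul_one]

theorem sgnSum_eq_zero_of_symmDiff_mem {S : Set (Finset ℕ)} {J : Finset ℕ} (hJ : Odd #J)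
    (hS : ∀ F ∈ S, F ∆ J ∈ S) : sgnSum S = 0 := by
  have hbij : Set.BijOn (· ∆ J) S S :=
    Set.InvOn.bijOn ⟨fun F _ ↦ symmDiff_symmDiff_cancel_right J F,
      fun F _ ↦ symmDiff_symmDiff_cancel_right J F⟩ hS hS
  have hsign (F : Finset ℕ) : (-1 : ℤ) ^ #F = -(-1) ^ #(F ∆ J) := by
    rw [neg_one_pow_card_symmDiff, hJ.neg_one_pow, mul_neg_one, neg_neg]
  have hneg : sgnSum S = -sgnSum S := by
    unfold sgnSum
    simp only [← finsum_neg_distrib]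
    exact finsum_mem_eq_of_bijOn (· ∆ J) hbij fun F _ ↦ hsign F
  exact self_eq_neg.mp hneg

end SymmDiff

section SRep

variable {A : ℕ → ℕ} {n : ℕ} {F : Finset ℕ}

theorem le_of_mem_sRep (hF : F ∈ SRep A n) {i : ℕ} (hi : i ∈ F) : A i ≤ n :=
  hF.2 ▸ single_le_sum_of_canonicallyOrdered hi

theorem add_le_of_mem_sRep (hF : F ∈ SRep A n) {i j : ℕ} (hi : i ∈ F) (hj : j ∈ F)
    (hij : i ≠ j) : A i + A j ≤ n :=
  hF.2 ▸ add_le_sum (fun _ _ ↦ Nat.zero_le _) hi hj hij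

theorem add_le_sum_of_notMem_sRep (hF : F ∈ SRep A n) {s : Finset ℕ} (hFs : F ⊆ s) {i : ℕ}
    (his : i ∈ s) (hiF : i ∉ F) : A i + n ≤ ∑ l ∈ s, A l := by
  rw [← hF.2, ← sum_insert hiF]
  exact sum_le_sum_of_subset (insert_subset his hFs)

theorem symmDiff_mem_sRep (hF : F ∈ SRep A n) {J : Finset ℕ} (hJpos : ∀ i ∈ J, 1 ≤ i)
    (hJ : ∑ i ∈ J, A i = 2 * ∑ i ∈ F ∩ J, A i) : F ∆ J ∈ SRep A n := by
  refine ⟨fun i hi ↦ ?_, ?_⟩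
  · rcases mem_symmDiff.mp hi with ⟨hi, -⟩ | ⟨hi, -⟩
    exacts [hF.1 i hi, hJpos i hi]
  · have hsum := sum_symmDiff_add_two_nsmul_sum_inter F J A
    rw [smul_eq_mul, hF.2] at hsum
    lia

end SRep

section GapSum

/-- The sum of the terms of index in `[1, j)` whose distance to `j` is not a multiple of `N`.
Its values at `k - N - 1` and `k - N` are the offsets of `A_{k,0}` and `A_{k,1}` from `A k`,
and the index `i` is the distance to `j`, as it is there. -/
def gapSum (N : ℕ) (A : ℕ → ℕ) (j : ℕ) : ℕ :=
  ∑ i ∈ Ico 1 j with ¬ N ∣ i, A (j - i)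

variable (N : ℕ) (A : ℕ → ℕ) (j : ℕ)

theorem gapSum_eq_sum_not_dvd_sub : gapSum N A j = ∑ l ∈ Ico 1 j with ¬ N ∣ j - l, A l := by
  refine sum_nbij' (j - ·) (j - ·) ?_ ?_ ?_ ?_ fun _ _ ↦ rfl <;>
    simp only [mem_filter, mem_Ico] <;> intro i hi
  · rw [Nat.sub_sub_self hi.1.2.le]
    exact ⟨by lia, hi.2⟩
  · exact ⟨by lia, hi.2⟩
  all_goals exact Nat.sub_sub_self hi.1.2.le

theorem gapSum_le_sum_Ico : gapSum N A j ≤ ∑ l ∈ Ico 1 j, A l := by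
  rw [gapSum_eq_sum_not_dvd_sub]
  exact sum_le_sum_of_subset (filter_subset _ _)

theorem gapSum_add_level :
    gapSum N A (j + N) = gapSum N A j + ∑ l ∈ Ico (j + 1) (j + N), A l := by
  have hsplit : {l ∈ Ico 1 (j + N) | ¬ N ∣ j + N - l} =
      {l ∈ Ico 1 j | ¬ N ∣ j - l} ∪ Ico (j + 1) (j + N) := by
    ext l
    simp only [mem_union, mem_filter, mem_Ico]
    rcases Nat.lt_trichotomy l j with hlj | rfl | hjl
    · rw [show j + N - l = j - l + N by lia, Nat.dvd_add_self_right]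
      lia
    · simp
    · have hnd : l < j + N → ¬ N ∣ j + N - l := fun h ↦
        Nat.not_dvd_of_pos_of_lt (by lia) (by lia)
      lia
  have hdisj : Disjoint {l ∈ Ico 1 j | ¬ N ∣ j - l} (Ico (j + 1) (j + N)) :=
    (Ico_disjoint_Ico_consecutive 1 j (j + N)).mono (filter_subset _ _)
      (Ico_subset_Ico_left j.le_succ)
  rw [gapSum_eq_sum_not_dvd_sub, gapSum_eq_sum_not_dvd_sub, hsplit, sum_union hdisj]

end GapSum

namespace QuasiFib

variable {N : ℕ} {A : ℕ → ℕ} {j : ℕ}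

theorem apply_add_level (hA : QuasiFib N A) (hj : 1 ≤ j) :
    A (j + N) = ∑ i ∈ Ico j (j + N), A i := by
  rw [hA.2.1 j hj, Icc_sub_one_right_eq_Ico_of_not_isMin (not_isMin_of_lt (b := 0) (by lia))]

theorem level_pos (hA : QuasiFib N A) : 0 < N := by
  by_contra! hN
  obtain rfl : N = 0 := by lia
  have hzero := hA.apply_add_level le_rfl
  have hpos := hA.1 1 le_rfl
  simp only [add_zero, Ico_self, sum_empty] at hzero
  lia

theorem sum_Ico_one_lt (hA : QuasiFib N A) (hj : 1 ≤ j) (hjN : j ≤ N) :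
    ∑ i ∈ Ico 1 j, A i < A j := by
  rw [← Icc_sub_one_right_eq_Ico_of_not_isMin (not_isMin_of_lt hj)]
  exact hA.2.2 j hj hjN

theorem sum_Ico_one_add_level (hA : QuasiFib N A) (hj : 1 ≤ j) :
    ∑ i ∈ Ico 1 (j + N), A i = ∑ i ∈ Ico 1 j, A i + A (j + N) := by
  rw [← sum_Ico_consecutive A hj (Nat.le_add_right j N), hA.apply_add_level hj]

theorem monotoneOn (hA : QuasiFib N A) : MonotoneOn A (Set.Ici 1) := by
  refine monotoneOn_nat_Ici_of_le_succ fun i hi ↦ ?_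
  rcases Nat.lt_or_ge i N with hiN | hNi
  · exact (single_le_sum_of_canonicallyOrdered (mem_Ico.mpr ⟨hi, i.lt_succ_self⟩)).trans
      (hA.sum_Ico_one_lt (by lia) hiN).le
  · obtain ⟨p, rfl⟩ := Nat.exists_eq_add_of_le' hNi
    have hN := hA.level_pos
    rw [Nat.add_right_comm, hA.apply_add_level (j := p + 1) (by lia)]
    exact single_le_sum_of_canonicallyOrdered (mem_Ico.mpr ⟨by lia, by lia⟩)

theorem add_le_apply_succ (hA : QuasiFib N A) (hN : 2 ≤ N) (hj : 1 ≤ j) :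
    A j + A (j + N) ≤ A (j + N + 1) := by
  have hmono : A j ≤ A (j + 1) := hA.monotoneOn hj (Set.mem_Ici.mpr (by lia)) j.le_succ
  have hpair : A (j + 1) + A (j + N) ≤ ∑ i ∈ Ico (j + 1) (j + 1 + N), A i :=
    add_le_sum (fun _ _ ↦ Nat.zero_le _) (mem_Ico.mpr ⟨by lia, by lia⟩)
      (mem_Ico.mpr ⟨by lia, by lia⟩) (by lia)
  rw [← hA.apply_add_level (by lia), show j + 1 + N = j + N + 1 by lia] at hpair
  lia

theorem gapSum_lt (hA : QuasiFib N A) (hj : 1 ≤ j) : gapSum N A j < A j := by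
  induction j using Nat.strong_induction_on with
  | _ j ih =>
    rcases Nat.lt_or_ge N j with hNj | hjN
    · obtain ⟨p, rfl⟩ := Nat.exists_eq_add_of_le' hNj.le
      have hN := hA.level_pos
      rw [gapSum_add_level, hA.apply_add_level (by lia),
        sum_eq_sum_Ico_succ_bot (show p < p + N by lia)]
      exact Nat.add_lt_add_right (ih p (by lia) (by lia)) _
    · exact (gapSum_le_sum_Ico N A j).trans_lt (hA.sum_Ico_one_lt hj hjN)

theorem sum_Ico_one_le_gapSum_succ (hA : QuasiFib N A) (hN : 2 ≤ N) (j : ℕ) :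
    ∑ i ∈ Ico 1 j, A i ≤ gapSum N A (j + 1) := by
  induction j using Nat.strong_induction_on with
  | _ j ih =>
    rcases Nat.eq_zero_or_pos j with rfl | hj
    · simp
    rcases Nat.lt_or_ge N j with hNj | hjN
    · obtain ⟨p, rfl⟩ := Nat.exists_eq_add_of_le' hNj.le
      have htop : A (p + N) ≤ ∑ l ∈ Ico (p + 1 + 1) (p + 1 + N), A l :=
        single_le_sum_of_canonicallyOrdered (mem_Ico.mpr ⟨by lia, by lia⟩)
      rw [hA.sum_Ico_one_add_level (by lia), Nat.add_right_comm, gapSum_add_level]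
      exact Nat.add_le_add (ih p (by lia)) htop
    · have hjmem : j ∈ {l ∈ Ico 1 (j + 1) | ¬ N ∣ j + 1 - l} := by
        rw [mem_filter, mem_Ico, Nat.add_sub_cancel_left, Nat.dvd_one]
        lia
      rw [gapSum_eq_sum_not_dvd_sub]
      exact (hA.sum_Ico_one_lt hj hjN).le.trans (single_le_sum_of_canonicallyOrdered hjmem)

theorem sum_Ico_one_le_add_gapSum_pred (hA : QuasiFib N A) (hN : 2 ≤ N) (hj : 1 ≤ j) :
    ∑ i ∈ Ico 1 j, A i ≤ A j + gapSum N A (j - 1) := by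
  rcases Nat.lt_or_ge N j with hNj | hjN
  · obtain ⟨p, rfl⟩ := Nat.exists_eq_add_of_le' hNj.le
    have hprefix : ∑ i ∈ Ico 1 p, A i ≤ gapSum N A (p + N - 1) :=
      calc ∑ i ∈ Ico 1 p, A i ≤ ∑ i ∈ Ico 1 (p + N - 2), A i :=
            sum_le_sum_of_subset (Ico_subset_Ico_right (by lia))
        _ ≤ gapSum N A (p + N - 2 + 1) := hA.sum_Ico_one_le_gapSum_succ hN _
        _ = gapSum N A (p + N - 1) := by congr 1; lia
    rw [hA.sum_Ico_one_add_level (by lia), add_comm]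
    exact Nat.add_le_add_left hprefix _
  · exact (hA.sum_Ico_one_lt hj hjN).le.trans (Nat.le_add_right _ _)

section Exchange

variable {m : ℕ} {F : Finset ℕ}

theorem inter_Icc_eq_singleton (hA : QuasiFib N A) (hj : 1 ≤ j) (hm : m < A j)
    (hF : F ∈ SRep A (A (j + N) + m)) (hk : j + N ∈ F) : F ∩ Icc j (j + N) = {j + N} := by
  refine eq_singleton_iff_unique_mem.mpr
    ⟨mem_inter.mpr ⟨hk, right_mem_Icc.mpr (Nat.le_add_right j N)⟩, fun i hi ↦ ?_⟩
  obtain ⟨hiF, hiJ⟩ := mem_inter.mp hi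
  have hji := (mem_Icc.mp hiJ).1
  by_contra hne
  have hle : A j ≤ A i := hA.monotoneOn hj (Set.mem_Ici.mpr (hj.trans hji)) hji
  have hsum := add_le_of_mem_sRep hF hiF hk hne
  lia

theorem subset_Icc_one (hA : QuasiFib N A) (hN : 2 ≤ N) (hj : 1 ≤ j) (hm : m < A j)
    (hF : F ∈ SRep A (A (j + N) + m)) : F ⊆ Icc 1 (j + N) := by
  refine fun i hi ↦ mem_Icc.mpr ⟨hF.1 i hi, ?_⟩
  by_contra! hki
  have hle : A (j + N + 1) ≤ A i :=
    hA.monotoneOn (Set.mem_Ici.mpr (by lia)) (Set.mem_Ici.mpr (hF.1 i hi)) hki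
  have hterm := le_of_mem_sRep hF hi
  have hsucc := hA.add_le_apply_succ hN hj
  lia

theorem inter_Icc_eq_Ico (hA : QuasiFib N A) (hN : 2 ≤ N) (hj : 1 ≤ j) (hm : m < A j)
    (hlow : ∑ i ∈ Ico 1 j, A i < A j + m) (hF : F ∈ SRep A (A (j + N) + m)) (hk : j + N ∉ F) :
    F ∩ Icc j (j + N) = Ico j (j + N) := by
  have hFsub : F ⊆ Ico 1 (j + N) := by
    rw [← Icc_erase_right]
    exact subset_erase.mpr ⟨hA.subset_Icc_one hN hj hm hF, hk⟩
  have hblock : Ico j (j + N) ⊆ F := by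
    intro i hi
    have hji := (mem_Ico.mp hi).1
    by_contra hiF
    have hle : A j ≤ A i := hA.monotoneOn hj (Set.mem_Ici.mpr (hj.trans hji)) hji
    have hsum := add_le_sum_of_notMem_sRep hF hFsub (Ico_subset_Ico_left hj hi) hiF
    rw [hA.sum_Ico_one_add_level hj] at hsum
    lia
  refine Subset.antisymm (fun i hi ↦ ?_) (subset_inter hblock Ico_subset_Icc_self)
  obtain ⟨hiF, hiJ⟩ := mem_inter.mp hi
  exact mem_Ico.mpr ⟨(mem_Icc.mp hiJ).1, (mem_Ico.mp (hFsub hiF)).2⟩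

theorem sum_inter_Icc (hA : QuasiFib N A) (hN : 2 ≤ N) (hj : 1 ≤ j) (hm : m < A j)
    (hlow : ∑ i ∈ Ico 1 j, A i < A j + m) (hF : F ∈ SRep A (A (j + N) + m)) :
    ∑ i ∈ F ∩ Icc j (j + N), A i = A (j + N) := by
  by_cases hk : j + N ∈ F
  · rw [hA.inter_Icc_eq_singleton hj hm hF hk, sum_singleton]
  · rw [hA.inter_Icc_eq_Ico hN hj hm hlow hF hk, hA.apply_add_level hj]

theorem sgnSum_sRep_add_eq_zero (hA : QuasiFib N A) (hNeven : Even N) (hj : 1 ≤ j) (hm : m < A j)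
    (hlow : ∑ i ∈ Ico 1 j, A i < A j + m) : sgnSum (SRep A (A (j + N) + m)) = 0 := by
  have hN : 2 ≤ N := Nat.le_of_dvd hA.level_pos hNeven.two_dvd
  have hodd : Odd #(Icc j (j + N)) := by
    rw [Nat.card_Icc, show j + N + 1 - j = N + 1 by lia]
    exact hNeven.add_one
  have htotal : ∑ i ∈ Icc j (j + N), A i = 2 * A (j + N) := by
    rw [← sum_Ico_add_eq_sum_Icc (Nat.le_add_right j N), ← hA.apply_add_level hj, two_mul]
  refine sgnSum_eq_zero_of_symmDiff_mem hodd fun F hF ↦ symmDiff_mem_sRep hF ?_ ?_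
  · exact fun i hi ↦ hj.trans (mem_Icc.mp hi).1
  · rw [hA.sum_inter_Icc hN hj hm hlow hF, htotal]

end Exchange

end QuasiFib

/-- For a quasifibonacci sequence of EVEN level `N`, if `k ≥ N+1` and
`A_{k,0} < n ≤ A_{k,1}`, then `h_n = 0`. -/
theorem stmt_18 (N : ℕ) (hN : 2 ≤ N) (hNeven : Even N) (A : ℕ → ℕ) (hA : QuasiFib N A)
    (k n : ℕ) (hk : N + 1 ≤ k) (h1 : Ak0 N A k < n) (h2 : n ≤ Ak1 N A k) :
    sgnSum (SRep A n) = 0 := by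
  obtain ⟨j, rfl⟩ := Nat.exists_eq_add_of_le' (Nat.le_of_succ_le hk)
  have hj : 1 ≤ j := by lia
  have hlower : A (j + N) + gapSum N A (j - 1) < n := by
    simpa only [Ak0, gapSum, Nat.add_sub_cancel] using h1
  have hupper : n ≤ A (j + N) + gapSum N A j := by
    simpa only [Ak1, gapSum, Nat.add_sub_cancel] using h2
  obtain ⟨m, rfl⟩ := Nat.exists_eq_add_of_le ((Nat.le_add_right _ _).trans hlower.le)
  have hm : m < A j := (Nat.le_of_add_le_add_left hupper).trans_lt (hA.gapSum_lt hj)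
  have hlow : ∑ i ∈ Ico 1 j, A i < A j + m :=
    (hA.sum_Ico_one_le_add_gapSum_pred hN hj).trans_lt
      (Nat.add_lt_add_left (Nat.lt_of_add_lt_add_left hlower) _)
  exact hA.sgnSum_sRep_add_eq_zero hNeven hj hm hlow
end
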